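/- Let 0 ≤ k < d be integers and let {x_u : u ∈ {0,1}^k} and {y_w : w ∈ {0,1,2}^k} be families of non-negative real numbers such that y_{u+v} ≥ x_u + x_v for all u, v ∈ {0,1}^k, and such that x_u ≥ x_v whenever v_i ≥ u_i for all i. Then Σ_{w ∈ {0,1,2}^k} y_w^{d−k} ≥ (2·(3/2)^k + 2^{d−k} − 2) · Σ_{u ∈ {0,1}^k} x_u^{d−k}. -/

import Mathlib

/-!
Every point `w ∈ {0,1,2}^k` is a sum `u + v` with `u, v ∈ {0,1}^k` in exactly `2^j` ways, where `j`
is the number of coordinates of `w` equal to `1`, i.e. the number of coordinates at which `u` and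
`v` differ. Write `m = d - k`. Averaging `y_w ^ m` over these representations gives
`∑_w y_w ^ m = ∑_{u,v} 2^{-|u △ v|} y_{u+v} ^ m`
(`sum_weight_fiber`, `sum_cube_three`). Now `y_{u+v} ^ m ≥ (x_u + x_v) ^ m ≥ x_u ^ m + x_v ^ m`, since `m ≥ 1`, while
for `u = v` the sharper value `(2 x_u) ^ m = 2 x_u ^ m + (2 ^ m - 2) x_u ^ m` holds. As
`∑_v 2^{-|u △ v|} = (3/2) ^ k` for each `u` (`sum_weight`), summing these bounds gives the claim.
-/

/-- The set `{0,1,…,n-1}^k` as a finset of functions `Fin k → ℕ`. -/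
def cube (k n : ℕ) : Finset (Fin k → ℕ) :=
  Fintype.piFinset fun _ => Finset.range n

/-- The weight `2^{-|u △ v|}`, where `|u △ v|` is the Hamming distance of `u` and `v`. -/
noncomputable def weight {k : ℕ} (u v : Fin k → ℕ) : ℝ :=
  ∏ i, if u i = v i then 1 else 1 / 2

lemma weight_nonneg {k : ℕ} (u v : Fin k → ℕ) : 0 ≤ weight u v :=
  Finset.prod_nonneg fun i _ => by split_ifs <;> norm_num

lemma weight_comm {k : ℕ} (u v : Fin k → ℕ) : weight u v = weight v u := by
  simp only [weight, eq_comm]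

lemma weight_self {k : ℕ} (u : Fin k → ℕ) : weight u u = 1 := by
  simp [weight]

lemma mem_cube_two {k : ℕ} {u : Fin k → ℕ} : u ∈ cube k 2 ↔ ∀ i, u i ≤ 1 := by
  simp only [cube, Fintype.mem_piFinset, Finset.mem_range]
  exact forall_congr' fun i => by omega

lemma sum_weight {k : ℕ} {u : Fin k → ℕ} (hu : u ∈ cube k 2) :
    ∑ v ∈ cube k 2, weight u v = (3 / 2) ^ k := by
  simp only [weight, cube]
  rw [Finset.sum_prod_piFinset (Finset.range 2)
    (fun i b => if u i = b then (1 : ℝ) else 1 / 2)]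
  rw [Finset.prod_congr rfl (g := fun _ => (3 / 2 : ℝ)), Finset.prod_const]
  · simp
  · intro i _
    have h := mem_cube_two.1 hu i
    interval_cases u i <;> norm_num [Finset.sum_range_succ]

/-- The weights of the representations `w = u + v` add up to `1`; the sum factors over the
coordinates. -/
lemma sum_weight_fiber {k : ℕ} {w : Fin k → ℕ} (hw : w ∈ cube k 3) :
    ∑ u ∈ cube k 2, ∑ v ∈ cube k 2, (if u + v = w then weight u v else 0) = 1 := by
  have key : ∀ u v : Fin k → ℕ, (if u + v = w then weight u v else 0) =
      ∏ i, if u i + v i = w i then (if u i = v i then (1 : ℝ) else 1 / 2) else 0 := by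
    intro u v
    by_cases h : u + v = w
    · subst h
      simp [weight]
    · rw [if_neg h]
      obtain ⟨i, hi⟩ := Function.ne_iff.1 h
      exact (Finset.prod_eq_zero (Finset.mem_univ i) (if_neg hi)).symm
  simp only [key, cube]
  have inner : ∀ u : Fin k → ℕ,
      ∑ v ∈ Fintype.piFinset (fun _ : Fin k => Finset.range 2),
        ∏ i, (if u i + v i = w i then (if u i = v i then (1 : ℝ) else 1 / 2) else 0) =
      ∏ i, ∑ b ∈ Finset.range 2,
        (if u i + b = w i then (if u i = b then (1 : ℝ) else 1 / 2) else 0) := fun u =>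
    Finset.sum_prod_piFinset (Finset.range 2)
      (fun i b => if u i + b = w i then (if u i = b then (1 : ℝ) else 1 / 2) else 0)
  simp only [inner]
  rw [Finset.sum_prod_piFinset (Finset.range 2) (fun i a => ∑ b ∈ Finset.range 2,
    (if a + b = w i then (if a = b then (1 : ℝ) else 1 / 2) else 0))]
  refine Finset.prod_eq_one fun i _ => ?_
  have h : w i < 3 := Finset.mem_range.1 (Fintype.mem_piFinset.1 hw i)
  interval_cases w i <;> norm_num [Finset.sum_range_succ]

/-- Averaging over the representations `w = u + v` turns a sum over `{0,1,2}^k` into a weighted sum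
over pairs of points of `{0,1}^k`. -/
lemma sum_cube_three {k : ℕ} (f : (Fin k → ℕ) → ℝ) :
    ∑ w ∈ cube k 3, f w = ∑ u ∈ cube k 2, ∑ v ∈ cube k 2, weight u v * f (u + v) := by
  calc ∑ w ∈ cube k 3, f w
      = ∑ w ∈ cube k 3, ∑ u ∈ cube k 2, ∑ v ∈ cube k 2,
          (if u + v = w then weight u v else 0) * f w := by
        refine Finset.sum_congr rfl fun w hw => ?_
        simp only [← Finset.sum_mul, sum_weight_fiber hw, one_mul]
    _ = ∑ u ∈ cube k 2, ∑ v ∈ cube k 2, ∑ w ∈ cube k 3,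
          (if u + v = w then weight u v else 0) * f w := by
        rw [Finset.sum_comm]
        exact Finset.sum_congr rfl fun u _ => Finset.sum_comm
    _ = _ := by
        refine Finset.sum_congr rfl fun u hu => Finset.sum_congr rfl fun v hv => ?_
        have h : u + v ∈ cube k 3 := by
          simp only [cube, Fintype.mem_piFinset, Finset.mem_range, Pi.add_apply]
          intro i
          have h1 := mem_cube_two.1 hu i
          have h2 := mem_cube_two.1 hv i
          omega
        simp [ite_mul, h]

/-- The Averaging Inequality (AI):
`∑_{w ∈ {0,1,2}^k} y_w^{d-k} ≥ (2 (3/2)^k + 2^{d-k} - 2) ∑_{u ∈ {0,1}^k} x_u^{d-k}`. -/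
theorem stmt4 (d k : ℕ) (hkd : k < d)
    (x y : (Fin k → ℕ) → ℝ)
    (hx : ∀ u, (∀ i, u i ≤ 1) → 0 ≤ x u)
    (hy : ∀ w, (∀ i, w i ≤ 2) → 0 ≤ y w)
    (hadd : ∀ u v : Fin k → ℕ, (∀ i, u i ≤ 1) → (∀ i, v i ≤ 1) →
      x u + x v ≤ y (u + v))
    (hmono : ∀ u v : Fin k → ℕ, (∀ i, u i ≤ 1) → (∀ i, v i ≤ 1) →
      (∀ i, u i ≤ v i) → x v ≤ x u) :
    ∑ w ∈ cube k 3, y w ^ (d - k) ≥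
      (2 * (3 / 2) ^ k + 2 ^ (d - k) - 2) * ∑ u ∈ cube k 2, x u ^ (d - k) := by
  set m := d - k with hm
  have hm0 : m ≠ 0 := by omega
  have bound : ∀ u ∈ cube k 2, ∀ v ∈ cube k 2,
      x u ^ m + x v ^ m + (if u = v then (2 ^ m - 2) * x u ^ m else 0) ≤ y (u + v) ^ m := by
    intro u hu v hv
    rw [mem_cube_two] at hu hv
    have h0 := hx u hu
    have h1 := hx v hv
    refine le_trans ?_ (pow_le_pow_left₀ (add_nonneg h0 h1) (hadd u v hu hv) m)
    split_ifs with h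
    · subst h
      rw [← two_mul (x u), mul_pow]
      linarith
    · rw [add_zero]
      exact pow_add_pow_le h0 h1 hm0
  rw [ge_iff_le, sum_cube_three]
  have e1 : ∑ u ∈ cube k 2, ∑ v ∈ cube k 2, weight u v * x u ^ m =
      (3 / 2) ^ k * ∑ u ∈ cube k 2, x u ^ m := by
    rw [Finset.mul_sum]
    exact Finset.sum_congr rfl fun u hu => by rw [← Finset.sum_mul, sum_weight hu]
  have e2 : ∑ u ∈ cube k 2, ∑ v ∈ cube k 2, weight u v * x v ^ m =
      (3 / 2) ^ k * ∑ u ∈ cube k 2, x u ^ m := by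
    rw [Finset.sum_comm, ← e1]
    simp only [weight_comm]
  have e3 : ∑ u ∈ cube k 2, ∑ v ∈ cube k 2,
      weight u v * (if u = v then (2 ^ m - 2) * x u ^ m else 0) =
      (2 ^ m - 2) * ∑ u ∈ cube k 2, x u ^ m := by
    rw [Finset.mul_sum]
    refine Finset.sum_congr rfl fun u hu => ?_
    simp [mul_ite, hu, weight_self]
  calc (2 * (3 / 2) ^ k + 2 ^ m - 2) * ∑ u ∈ cube k 2, x u ^ m
      = ∑ u ∈ cube k 2, ∑ v ∈ cube k 2, weight u v *
          (x u ^ m + x v ^ m + (if u = v then (2 ^ m - 2) * x u ^ m else 0)) := by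
        simp only [mul_add, Finset.sum_add_distrib]
        rw [e1, e2, e3]
        ring
    _ ≤ _ := Finset.sum_le_sum fun u hu => Finset.sum_le_sum fun v hv =>
        mul_le_mul_of_nonneg_left (bound u hu v hv) (weight_nonneg u v)
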